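/- Taylor expansion commutes with head reduction: if M is a λμ-term on which the head reduction H is defined (i.e. M is not a head normal form), then T(H(M)) = ⋃_{t∈T(M)} H(t). -/

import Mathlib

/-!
Every clause defining head reduction on λμ-terms is mirrored by a clause defining it on resource
terms, so the theorem reduces, by induction on the term, to the fact that the Taylor expansion
commutes with the three operations that create the reducts:

* `taylor_subst`: substitution corresponds to linear substitution;
* `taylor_napp`: named application corresponds to linear named application;
* `taylor_renameL`: renaming corresponds to renaming.

No freshness side conditions are needed: the operations on both sides treat binders in
the same way, so the identities hold for raw syntax.

In the first two, a bag of approximants of `N` is distributed over the occurrences of a variable or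
name. The only interesting clause is application, where the bag is split between the function
and the elements of the argument bag. Here it matters that, as the bag ranges over *all* lists of
approximants of `N`, its splittings into `n` parts range over *all* `n`-tuples of such
lists: each tuple is a splitting of its concatenation (`mem_splits_flatten`).
Since this argument is shared by the two operations, it is carried out once, for an arbitrary
operation `F` with an extension `FB` to bags (`mem_app_iff`).
-/

set_option maxHeartbeats 1000000

namespace RLMu

inductive Rt : Type where
  | var : ℕ → Rt
  | lam : ℕ → Rt → Rt
  | app : Rt → List Rt → Rt
  | mu  : ℕ → ℕ → Rt → Rt

noncomputable instance : DecidableEq Rt := Classical.decEq _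

namespace Rt

mutual
  def renameN (a b : ℕ) : Rt → Rt
    | var y => var y
    | lam y t => lam y (renameN a b t)
    | app t ts => app (renameN a b t) (renameNBag a b ts)
    | mu g e t =>
        if g = b then mu g e t
        else mu g (if e = b then a else e) (renameN a b t)
  def renameNBag (a b : ℕ) : List Rt → List Rt
    | [] => []
    | t :: ts => renameN a b t :: renameNBag a b ts
end

def modifyIdx (t : Rt) : List (List Rt) → ℕ → List (List Rt)
  | [], _ => []
  | l :: ls, 0 => (t :: l) :: ls
  | l :: ls, i + 1 => l :: modifyIdx t ls i

def splits (n : ℕ) : List Rt → Multiset (List (List Rt))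
  | [] => {List.replicate n []}
  | t :: ts => (splits n ts).bind fun ls => (Multiset.range n).map fun i => modifyIdx t ls i

def splits2 : List Rt → Multiset (List Rt × List Rt)
  | [] => {([], [])}
  | t :: ts => (splits2 ts).bind fun p => {(t :: p.1, p.2), (p.1, t :: p.2)}

-- the (quantitative) linear substitution t⟨[ū]/x⟩ : the sum over all ways of
-- assigning the elements of the bag bijectively to the free occurrences of x in t
mutual
  def linSub (x : ℕ) : Rt → List Rt → Multiset Rt
    | var y, bag =>
        if y = x then (match bag with | [u] => ({u} : Multiset Rt) | _ => 0)
        else (match bag with | [] => ({var y} : Multiset Rt) | _ => 0)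
    | lam y t, bag =>
        if y = x then (match bag with | [] => ({lam y t} : Multiset Rt) | _ => 0)
        else (linSub x t bag).map (lam y)
    | mu g e t, bag => (linSub x t bag).map (mu g e)
    | app t ts, bag =>
        (splits (ts.length + 1) bag).bind fun ls =>
          match ls with
          | l0 :: rest =>
              (linSub x t l0).bind fun s =>
                (linSubBag x ts rest).map fun ss => app s ss
          | [] => 0
  def linSubBag (x : ℕ) : List Rt → List (List Rt) → Multiset (List Rt)
    | [], [] => {([] : List Rt)}
    | [], _ :: _ => 0
    | _ :: _, [] => 0
    | t :: ts, l :: ls =>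
        (linSub x t l).bind fun s => (linSubBag x ts ls).map fun ss => s :: ss
end

end Rt

end RLMu

namespace RLMu
namespace Rt

-- the (quantitative) linear named application ⟨t⟩_a[ū]
mutual
  def nApp (a : ℕ) : Rt → List Rt → Multiset Rt
    | var y, bag => (match bag with | [] => ({var y} : Multiset Rt) | _ => 0)
    | lam y t, bag => (nApp a t bag).map (lam y)
    | mu g e t, bag =>
        if g = a then (match bag with | [] => ({mu g e t} : Multiset Rt) | _ => 0)
        else if e = a then
          (splits2 bag).bind fun p =>
            (nApp a t p.1).map fun s => mu g e (app s p.2)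
        else (nApp a t bag).map (mu g e)
    | app t ts, bag =>
        (splits (ts.length + 1) bag).bind fun ls =>
          match ls with
          | l0 :: rest =>
              (nApp a t l0).bind fun s =>
                (nAppBag a ts rest).map fun ss => app s ss
          | [] => 0
  def nAppBag (a : ℕ) : List Rt → List (List Rt) → Multiset (List Rt)
    | [], [] => {([] : List Rt)}
    | [], _ :: _ => 0
    | _ :: _, [] => 0
    | t :: ts, l :: ls =>
        (nApp a t l).bind fun s => (nAppBag a ts ls).map fun ss => s :: ss
end

mutual
  def degName (a : ℕ) : Rt → ℕ
    | var _ => 0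
    | lam _ t => degName a t
    | app t ts => degName a t + degNameBag a ts
    | mu g e t => if g = a then 0 else (if e = a then 1 else 0) + degName a t
  def degNameBag (a : ℕ) : List Rt → ℕ
    | [] => 0
    | t :: ts => degName a t + degNameBag a ts
end

/-- the linear named application `⟨[e]t⟩_g [ū]` on the named term `[e]t`, a named
term `[e']t'` being represented by the pair `(e', t')` -/
def nAppNamed (g e : ℕ) (t : Rt) (bag : List Rt) : Multiset (ℕ × Rt) :=
  if e = g then
    (splits2 bag).bind fun p => (nApp g t p.1).map fun s => (g, app s p.2)
  else (nApp g t bag).map fun s => (e, s)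

/-- `μa.⟨[b]t⟩_a [ū]`, the reduct of the μ-redex `(μa.[b]t)[ū]` -/
def muRedex (a b : ℕ) (t : Rt) (bag : List Rt) : Multiset Rt :=
  if b = a then
    (splits2 bag).bind fun p => (nApp a t p.1).map fun s => mu a a (app s p.2)
  else (nApp a t bag).map (mu a b)

end Rt

open Rt

/-- base step of the λʳ-reduction -/
inductive BaseLam : Rt → Multiset Rt → Prop
  | step (x : ℕ) (t : Rt) (bag : List Rt) :
      BaseLam (.app (.lam x t) bag) (linSub x t bag)

/-- base step of the μʳ-reduction -/
inductive BaseMu : Rt → Multiset Rt → Prop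
  | step (a b : ℕ) (t : Rt) (bag : List Rt) :
      BaseMu (.app (.mu a b t) bag) (muRedex a b t bag)

/-- base step of the ρʳ-reduction -/
inductive BaseRho : Rt → Multiset Rt → Prop
  | step (g a b e : ℕ) (t : Rt) :
      BaseRho (.mu g a (.mu b e t))
        ({.mu g (if e = b then a else e) (renameN a b t)} : Multiset Rt)

/-- closure of a base reduction under single-hole resource contexts -/
inductive Ctx (B : Rt → Multiset Rt → Prop) : Rt → Multiset Rt → Prop
  | base {t S} : B t S → Ctx B t S
  | lam (x : ℕ) {t S} : Ctx B t S → Ctx B (.lam x t) (S.map (.lam x))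
  | mu (a b : ℕ) {t S} : Ctx B t S → Ctx B (.mu a b t) (S.map (.mu a b))
  | appL (bag : List Rt) {t S} :
      Ctx B t S → Ctx B (.app t bag) (S.map fun s => .app s bag)
  | appR (t : Rt) (l r : List Rt) {u S} :
      Ctx B u S → Ctx B (.app t (l ++ u :: r)) (S.map fun s => .app t (l ++ s :: r))

/-- the quantitative resource reduction →ᵣ⁺ from terms to sums in ℕ⟨λμʳ⟩ -/
def QStep : Rt → Multiset Rt → Prop :=
  Ctx fun t S => BaseLam t S ∨ BaseMu t S ∨ BaseRho t S

/-- the quantitative resource reduction →ᵣ⁺ on sums of ℕ⟨λμʳ⟩ -/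
inductive QRed : Multiset Rt → Multiset Rt → Prop
  | mk {t : Rt} {S R : Multiset Rt} : QStep t S → QRed (t ::ₘ R) (S + R)

/-- the qualitative version (with idempotent sum, i.e. with sums in 2⟨λμʳ⟩)
of the contextual closure of a base reduction: from terms to sums in 2⟨λμʳ⟩ -/
noncomputable def StepOf (B : Rt → Multiset Rt → Prop) (t : Rt) (T : Finset Rt) : Prop :=
  ∃ S : Multiset Rt, Ctx B t S ∧ T = S.toFinset

/-- the reduction →_{λʳ} : contextual closure of the λʳ base step, in 2⟨λμʳ⟩ -/
noncomputable def StepLam : Rt → Finset Rt → Prop := StepOf BaseLam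
/-- the reduction →_{μʳ} : contextual closure of the μʳ base step, in 2⟨λμʳ⟩ -/
noncomputable def StepMu : Rt → Finset Rt → Prop := StepOf BaseMu
/-- the reduction →_{ρʳ} : contextual closure of the ρʳ base step, in 2⟨λμʳ⟩ -/
noncomputable def StepRho : Rt → Finset Rt → Prop := StepOf BaseRho

/-- the resource reduction →ᵣ from terms to sums in 2⟨λμʳ⟩ -/
noncomputable def RStep (t : Rt) (T : Finset Rt) : Prop :=
  ∃ S : Multiset Rt, QStep t S ∧ T = S.toFinset

/-- the resource reduction →ᵣ on sums in 2⟨λμʳ⟩ -/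
inductive FRed : Finset Rt → Finset Rt → Prop
  | mk {t : Rt} {R S : Finset Rt} : RStep t S → t ∉ R → FRed (insert t R) (S ∪ R)

/-- a resource term is →ᵣ-normal -/
def NormalTm (t : Rt) : Prop := ∀ S : Multiset Rt, ¬ QStep t S

end RLMu

namespace RLMu
namespace Rt

-- number of μ-abstractions occurring in a term
mutual
  def degMu : Rt → ℕ
    | var _ => 0
    | lam _ t => degMu t
    | mu _ _ t => degMu t + 1
    | app t ts => degMu t + degMuBag ts
  def degMuBag : List Rt → ℕ
    | [] => 0
    | t :: ts => degMu t + degMuBag ts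
end

-- the multiset of the depths (number of enclosing named subterms) of the
-- occurrences of bags in a term
mutual
  def depths : Rt → Multiset ℕ
    | var _ => 0
    | lam _ t => depths t
    | mu _ _ t => (depths t).map (· + 1)
    | app t ts => (0 : ℕ) ::ₘ (depths t + depthsBag ts)
  def depthsBag : List Rt → Multiset ℕ
    | [] => 0
    | t :: ts => depths t + depthsBag ts
end

/-- the multiset measure `m(t)` : the multiset of `deg_μ(t) - d_t(b)` over the
occurrences `b` of bags in `t` -/
def msr (t : Rt) : Multiset ℕ := (depths t).map fun d => degMu t - d

end Rt

/-- the (Dershowitz–Manna) multiset order on finite multisets of naturals -/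
def MLT (M N : Multiset ℕ) : Prop :=
  ∃ X Y Z : Multiset ℕ, X ≠ 0 ∧ N = Z + X ∧ M = Z + Y ∧ ∀ y ∈ Y, ∃ x ∈ X, y < x

/-- the measure `SN(t) = (m(t), deg_μ(t))` -/
def SNm (t : Rt) : Multiset ℕ × ℕ := (Rt.msr t, Rt.degMu t)

/-- lexicographic order on `!ℕ × ℕ` (multiset order on the first component) -/
def SNlt : Multiset ℕ × ℕ → Multiset ℕ × ℕ → Prop := Prod.Lex MLT (· < ·)

end RLMu

namespace RLMu

/-- λμ-terms. `mu a b M` denotes `μa.[b]M`. -/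
inductive Lt : Type where
  | var : ℕ → Lt
  | lam : ℕ → Lt → Lt
  | app : Lt → Lt → Lt
  | mu  : ℕ → ℕ → Lt → Lt
  deriving DecidableEq

namespace Lt

/-- substitution `M{N/x}` -/
def subst (x : ℕ) (N : Lt) : Lt → Lt
  | var y => if y = x then N else var y
  | lam y M => if y = x then lam y M else lam y (subst x N M)
  | app M P => app (subst x N M) (subst x N P)
  | mu a b M => mu a b (subst x N M)

/-- renaming `M{a/b}` of the free occurrences of the name `b` by `a` -/
def renameL (a b : ℕ) : Lt → Lt
  | var y => var y
  | lam y M => lam y (renameL a b M)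
  | app M P => app (renameL a b M) (renameL a b P)
  | mu g e M =>
      if g = b then mu g e M
      else mu g (if e = b then a else e) (renameL a b M)

/-- the named application `(M)_a N` -/
def napp (a : ℕ) (N : Lt) : Lt → Lt
  | var y => var y
  | lam y M => lam y (napp a N M)
  | app M P => app (napp a N M) (napp a N P)
  | mu g e M =>
      if g = a then mu g e M
      else if e = a then mu g e (app (napp a N M) N)
      else mu g e (napp a N M)

end Lt

open Lt

/-- base steps of the λμ-reduction: λ, μ and ρ -/
inductive LBase : Lt → Lt → Prop
  | lamStep (x : ℕ) (M N : Lt) : LBase (.app (.lam x M) N) (subst x N M)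
  | muStep (a b : ℕ) (M N : Lt) :
      LBase (.app (.mu a b M) N)
        (if b = a then .mu a a (.app (napp a N M) N) else .mu a b (napp a N M))
  | rhoStep (g a b e : ℕ) (M : Lt) :
      LBase (.mu g a (.mu b e M)) (.mu g (if e = b then a else e) (renameL a b M))

/-- the λμ-reduction → : contextual closure of the base steps -/
inductive LStep : Lt → Lt → Prop
  | base {M N} : LBase M N → LStep M N
  | lam (x : ℕ) {M N} : LStep M N → LStep (.lam x M) (.lam x N)
  | mu (a b : ℕ) {M N} : LStep M N → LStep (.mu a b M) (.mu a b N)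
  | appL (P : Lt) {M N} : LStep M N → LStep (.app M P) (.app N P)
  | appR (P : Lt) {M N} : LStep M N → LStep (.app P M) (.app P N)

/-- the λμρ-equivalence `=_{λμρ}` generated by the λμ-reduction -/
inductive LEquiv : Lt → Lt → Prop
  | step {M N} : LStep M N → LEquiv M N
  | refl (M) : LEquiv M M
  | symm {M N} : LEquiv M N → LEquiv N M
  | trans {M N P} : LEquiv M N → LEquiv N P → LEquiv M P

/-- the (qualitative) Taylor expansion -/
def Taylor : Lt → Set Rt
  | .var x => {Rt.var x}
  | .lam x M => Rt.lam x '' Taylor M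
  | .mu a b M => Rt.mu a b '' Taylor M
  | .app M N =>
      {r | ∃ s ∈ Taylor M, ∃ bag : List Rt, (∀ u ∈ bag, u ∈ Taylor N) ∧ r = Rt.app s bag}

/-- the set `nf(t)` of the addends of the (unique) →ᵣ-normal form of a resource
term `t` : the →ᵣ-normal resource terms appearing in some sum reachable from `t` -/
def NFof (t : Rt) : Set Rt :=
  {s | NormalTm s ∧ ∃ T : Finset Rt, Relation.ReflTransGen FRed {t} T ∧ s ∈ T}

/-- `NT(M)`, the normal form of the Taylor expansion of `M` -/
def NT (M : Lt) : Set Rt := ⋃ t ∈ Taylor M, NFof t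

/-- λμ-contexts with `n` holes (each hole may occur any number of times) -/
inductive Ctxt (n : ℕ) : Type where
  | hole : Fin n → Ctxt n
  | var : ℕ → Ctxt n
  | lam : ℕ → Ctxt n → Ctxt n
  | app : Ctxt n → Ctxt n → Ctxt n
  | mu  : ℕ → ℕ → Ctxt n → Ctxt n

/-- filling the holes of a context with terms -/
def fill {n : ℕ} : Ctxt n → (Fin n → Lt) → Lt
  | .hole i, f => f i
  | .var x, _ => .var x
  | .lam x C, f => .lam x (fill C f)
  | .app C D, f => .app (fill C f) (fill D f)
  | .mu a b C, f => .mu a b (fill C f)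

/-- head reduction on λμ-terms (`none` iff the term is a head normal form):
first the leftmost ρ-redex in the head, otherwise the head redex -/
def headRed : Lt → Option Lt
  | .var _ => none
  | .lam x M => (headRed M).map (.lam x)
  | .mu g a (.mu b e M) => some (.mu g (if e = b then a else e) (renameL a b M))
  | .mu g a M => (headRed M).map (.mu g a)
  | .app (.lam x P) N => some (subst x N P)
  | .app (.mu a b P) N =>
      some (if b = a then .mu a a (.app (napp a N P) N) else .mu a b (napp a N P))
  | .app M N => (headRed M).map (fun M' => .app M' N)

/-- `M` is a head normal form -/
def IsHnf (M : Lt) : Prop := headRed M = none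

/-- the `n`-fold iteration `Hⁿ` of head reduction (as a partial function) -/
def headRedIter : ℕ → Lt → Option Lt
  | 0, M => some M
  | n + 1, M => (headRed M).bind (headRedIter n)

/-- head reduction on resource λμ-terms (the empty sum if the term is a hnf) -/
def headRedR : Rt → Multiset Rt
  | .var _ => 0
  | .lam x t => (headRedR t).map (.lam x)
  | .mu g a (.mu b e t) => {.mu g (if e = b then a else e) (Rt.renameN a b t)}
  | .mu g a t => (headRedR t).map (.mu g a)
  | .app (.lam x p) bag => Rt.linSub x p bag
  | .app (.mu a b p) bag => Rt.muRedex a b p bag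
  | .app t bag => (headRedR t).map fun s => .app s bag

/-- iterated λ-abstraction `λz₁…zₙ.M` -/
def lams : List ℕ → Lt → Lt
  | [], M => M
  | x :: xs, M => .lam x (lams xs M)

/-- iterated application `M N₁ … Nₙ` -/
def apps : Lt → List Lt → Lt
  | M, [] => M
  | M, N :: Ns => apps (.app M N) Ns

/-- an upper bound for the variables occurring in a term -/
def varBound : Lt → ℕ
  | .var x => x + 1
  | .lam x M => max (x + 1) (varBound M)
  | .app M N => max (varBound M) (varBound N)
  | .mu _ _ M => varBound M

/-- `True := λxy.x` -/
def TrueT : Lt := .lam 0 (.lam 1 (.var 0))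
/-- `False := λxy.y` -/
def FalseT : Lt := .lam 0 (.lam 1 (.var 1))
/-- the pair `⟨M,N⟩ := λz.zMN` (with `z` fresh) -/
def pairT (M N : Lt) : Lt :=
  let z := max (varBound M) (varBound N)
  .lam z (.app (.app (.var z) M) N)
/-- `Ω := (λx.xx)(λx.xx)` -/
def Omega : Lt := .app (.lam 0 (.app (.var 0) (.var 0))) (.lam 0 (.app (.var 0) (.var 0)))

/-- the λμ-theory `≡_τ` equating terms with the same normal form of the Taylor
expansion -/
def Teq (M N : Lt) : Prop := NT M = NT N

end RLMu

namespace RLMu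

open Rt Lt

/-! ### Splittings of bags -/

theorem mem_modifyIdx {t : Rt} {ls : List (List Rt)} {i : ℕ} {l : List Rt} {u : Rt}
    (hl : l ∈ modifyIdx t ls i) (hu : u ∈ l) : u = t ∨ ∃ l' ∈ ls, u ∈ l' := by
  induction ls generalizing i with
  | nil => simp [modifyIdx] at hl
  | cons a ls ih =>
    cases i with
    | zero =>
      simp only [modifyIdx, List.mem_cons] at hl
      rcases hl with rfl | hl
      · rcases List.mem_cons.1 hu with rfl | hu
        · exact .inl rfl
        · exact .inr ⟨a, by simp, hu⟩
      · exact .inr ⟨l, by simp [hl], hu⟩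
    | succ i =>
      simp only [modifyIdx, List.mem_cons] at hl
      rcases hl with rfl | hl
      · exact .inr ⟨l, by simp, hu⟩
      · rcases ih hl with h | ⟨l₁, h, h₁⟩
        · exact .inl h
        · exact .inr ⟨l₁, by simp [h], h₁⟩

/-- A splitting only contains elements of the bag that is split. -/
theorem mem_of_mem_splits {n : ℕ} {bag : List Rt} {ls : List (List Rt)} (h : ls ∈ splits n bag)
    {l : List Rt} (hl : l ∈ ls) {u : Rt} (hu : u ∈ l) : u ∈ bag := by
  induction bag generalizing ls l with
  | nil =>
    simp only [splits, Multiset.mem_singleton] at h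
    subst h
    rw [List.eq_of_mem_replicate hl] at hu
    exact hu
  | cons t bag ih =>
    simp only [splits, Multiset.mem_bind, Multiset.mem_map] at h
    obtain ⟨ls', h', i, -, rfl⟩ := h
    rcases mem_modifyIdx hl hu with rfl | ⟨l', hl', hu'⟩
    · simp
    · exact List.mem_cons_of_mem _ (ih h' hl' hu')

theorem splits_nil_cons {n : ℕ} {bag : List Rt} {ls : List (List Rt)} (h : ls ∈ splits n bag) :
    [] :: ls ∈ splits (n + 1) bag := by
  induction bag generalizing ls with
  | nil =>
    simp only [splits, Multiset.mem_singleton] at h ⊢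
    subst h
    rfl
  | cons t bag ih =>
    simp only [splits, Multiset.mem_bind, Multiset.mem_map, Multiset.mem_range] at h ⊢
    obtain ⟨ls', h', i, hi, rfl⟩ := h
    exact ⟨_, ih h', i + 1, by omega, rfl⟩

/-- Any tuple of bags is a splitting of its concatenation. -/
theorem mem_splits_flatten (ls : List (List Rt)) : ls ∈ splits ls.length ls.flatten := by
  induction ls with
  | nil => simp [splits]
  | cons l ls ih =>
    induction l with
    | nil => exact splits_nil_cons ih
    | cons t l ihl =>
      simp only [List.flatten_cons, List.cons_append, splits, Multiset.mem_bind, Multiset.mem_map,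
        Multiset.mem_range]
      exact ⟨l :: ls, ihl, 0, by simp, rfl⟩

theorem mem_of_mem_splits2 {bag : List Rt} {p : List Rt × List Rt} (h : p ∈ splits2 bag)
    {u : Rt} (hu : u ∈ p.1 ∨ u ∈ p.2) : u ∈ bag := by
  induction bag generalizing p with
  | nil =>
    simp only [splits2, Multiset.mem_singleton] at h
    subst h
    simp at hu
  | cons t bag ih =>
    simp only [splits2, Multiset.mem_bind, Multiset.insert_eq_cons, Multiset.mem_cons,
      Multiset.mem_singleton] at h
    obtain ⟨q, hq, rfl | rfl⟩ := h
    · have := @ih q hq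
      simp only [List.mem_cons] at hu ⊢
      tauto
    · have := @ih q hq
      simp only [List.mem_cons] at hu ⊢
      tauto

theorem mem_splits2_append (l r : List Rt) : (l, r) ∈ splits2 (l ++ r) := by
  induction l with
  | nil =>
    induction r with
    | nil => simp [splits2]
    | cons t r ih =>
      simp only [List.nil_append, splits2, Multiset.mem_bind] at ih ⊢
      exact ⟨_, ih, by simp⟩
  | cons t l ih =>
    simp only [List.cons_append, splits2, Multiset.mem_bind]
    exact ⟨_, ih, by simp⟩

/-! ### Operations consuming a bag -/

/-- `FB` is the extension to bags of the operation `F`, given by the product of the sums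
obtained on the individual elements. -/
structure IsBagExt (F : Rt → List Rt → Multiset Rt)
    (FB : List Rt → List (List Rt) → Multiset (List Rt)) : Prop where
  nil_nil : FB [] [] = {([] : List Rt)}
  nil_cons : ∀ l ls, FB [] (l :: ls) = 0
  cons_nil : ∀ t ts, FB (t :: ts) [] = 0
  cons_cons : ∀ t ts l ls, FB (t :: ts) (l :: ls) =
    (F t l).bind fun s => (FB ts ls).map fun ss => s :: ss

/-- `B` is the union of the sums obtained by applying `F` to an element of `A` and a bag of
elements of `C`. -/
def IsImage (F : Rt → List Rt → Multiset Rt) (A C B : Set Rt) : Prop :=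
  ∀ s, s ∈ B ↔ ∃ t ∈ A, ∃ bag : List Rt, (∀ u ∈ bag, u ∈ C) ∧ s ∈ F t bag

section
variable {F : Rt → List Rt → Multiset Rt} {FB : List Rt → List (List Rt) → Multiset (List Rt)}
  {A C B : Set Rt}

theorem IsBagExt.length_eq (hF : IsBagExt F FB) {ss ts : List Rt} {ls : List (List Rt)}
    (h : ss ∈ FB ts ls) : ls.length = ts.length := by
  induction ts generalizing ls ss with
  | nil =>
    cases ls with
    | nil => rfl
    | cons l ls => simp [hF.nil_cons] at h
  | cons t ts ih =>
    cases ls with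
    | nil => simp [hF.cons_nil] at h
    | cons l ls =>
      rw [hF.cons_cons, Multiset.mem_bind] at h
      obtain ⟨_, -, h⟩ := h
      obtain ⟨ss, h, -⟩ := Multiset.mem_map.1 h
      simp [ih h]

/-- Bags of elements of the image are those produced by the extension of `F` to bags; the length
condition is what makes the tuple of bags a possible splitting in the application clause. -/
theorem forall_mem_iff (hF : IsBagExt F FB) (h : IsImage F A C B) (ss : List Rt) :
    (∀ s ∈ ss, s ∈ B) ↔ ∃ ts : List Rt, (∀ t ∈ ts, t ∈ A) ∧ ∃ ls : List (List Rt),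
      ls.length = ts.length ∧ (∀ l ∈ ls, ∀ u ∈ l, u ∈ C) ∧ ss ∈ FB ts ls := by
  constructor
  · induction ss with
    | nil => exact fun _ => ⟨[], by simp, [], rfl, by simp, by simp [hF.nil_nil]⟩
    | cons s ss ih =>
      intro hs
      obtain ⟨ts, hts, ls, hlen, hls, hm⟩ := ih fun u hu => hs u (List.mem_cons_of_mem _ hu)
      obtain ⟨t, ht, l, hl, hm'⟩ := (h s).1 (hs s (by simp))
      refine ⟨t :: ts, by simpa using ⟨ht, hts⟩, l :: ls, by simp [hlen],
        List.forall_mem_cons.2 ⟨hl, hls⟩, ?_⟩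
      rw [hF.cons_cons, Multiset.mem_bind]
      exact ⟨s, hm', Multiset.mem_map_of_mem _ hm⟩
  · rintro ⟨ts, hts, ls, -, hls, hm⟩
    induction ts generalizing ls ss with
    | nil =>
      cases ls with
      | nil =>
        rw [hF.nil_nil, Multiset.mem_singleton] at hm
        simp [hm]
      | cons l ls => simp [hF.nil_cons] at hm
    | cons t ts ih =>
      cases ls with
      | nil => simp [hF.cons_nil] at hm
      | cons l ls =>
        rw [hF.cons_cons, Multiset.mem_bind] at hm
        obtain ⟨s, hs, hm⟩ := hm
        obtain ⟨ss, hss, rfl⟩ := Multiset.mem_map.1 hm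
        rw [List.forall_mem_cons] at hts hls ⊢
        exact ⟨(h s).2 ⟨t, hts.1, l, hls.1, hs⟩, ih ss hts.2 ls hls.2 hss⟩

/-- The application clause shared by linear substitution and linear named application. -/
theorem mem_app_iff (hF : IsBagExt F FB)
    (happ : ∀ t ts bag, F (.app t ts) bag =
      (splits (ts.length + 1) bag).bind fun ls =>
        match ls with
        | l0 :: rest => (F t l0).bind fun s => (FB ts rest).map fun ss => Rt.app s ss
        | [] => 0)
    {A₁ B₁ A₂ B₂ : Set Rt} (h₁ : IsImage F A₁ C B₁) (h₂ : IsImage F A₂ C B₂) :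
    IsImage F {r | ∃ s ∈ A₁, ∃ bag : List Rt, (∀ u ∈ bag, u ∈ A₂) ∧ r = Rt.app s bag} C
      {r | ∃ s ∈ B₁, ∃ bag : List Rt, (∀ u ∈ bag, u ∈ B₂) ∧ r = Rt.app s bag} := by
  intro r
  constructor
  · rintro ⟨s, hs, ss, hss, rfl⟩
    obtain ⟨t, ht, l, hl, hm⟩ := (h₁ s).1 hs
    obtain ⟨ts, hts, ls, hlen, hls, hm'⟩ := (forall_mem_iff hF h₂ ss).1 hss
    refine ⟨_, ⟨t, ht, ts, hts, rfl⟩, (l :: ls).flatten, ?_, ?_⟩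
    · intro u hu
      obtain ⟨l', hl', hu'⟩ := List.mem_flatten.1 hu
      exact List.forall_mem_cons (p := fun l => ∀ u ∈ l, u ∈ C) |>.2 ⟨hl, hls⟩ l' hl' u hu'
    · rw [happ, Multiset.mem_bind]
      refine ⟨l :: ls, ?_, ?_⟩
      · rw [← hlen]
        exact mem_splits_flatten (l :: ls)
      · exact Multiset.mem_bind.2 ⟨s, hm, Multiset.mem_map_of_mem _ hm'⟩
  · rintro ⟨_, ⟨t, ht, ts, hts, rfl⟩, bag, hbag, hm⟩
    rw [happ, Multiset.mem_bind] at hm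
    obtain ⟨ls, hls, hm⟩ := hm
    have hC : ∀ l ∈ ls, ∀ u ∈ l, u ∈ C := fun l hl u hu => hbag u (mem_of_mem_splits hls hl hu)
    cases ls with
    | nil => simp at hm
    | cons l ls =>
      rw [List.forall_mem_cons] at hC
      obtain ⟨s, hs, hm⟩ := Multiset.mem_bind.1 hm
      obtain ⟨ss, hss, rfl⟩ := Multiset.mem_map.1 hm
      refine ⟨s, (h₁ s).2 ⟨t, ht, l, hC.1, hs⟩, ss, ?_, rfl⟩
      exact (forall_mem_iff hF h₂ ss).2 ⟨ts, hts, ls, hF.length_eq hss, hC.2, hss⟩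

/-- Clauses in which `F` commutes with a unary constructor `c`. -/
theorem IsImage.map {c : Rt → Rt} (hc : ∀ t bag, F (c t) bag = (F t bag).map c)
    (h : IsImage F A C B) : IsImage F (c '' A) C (c '' B) := by
  intro r
  constructor
  · rintro ⟨s, hs, rfl⟩
    obtain ⟨t, ht, bag, hb, hm⟩ := (h s).1 hs
    exact ⟨_, ⟨t, ht, rfl⟩, bag, hb, by rw [hc]; exact Multiset.mem_map_of_mem _ hm⟩
  · rintro ⟨_, ⟨t, ht, rfl⟩, bag, hb, hm⟩
    rw [hc] at hm
    obtain ⟨s, hs, rfl⟩ := Multiset.mem_map.1 hm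
    exact ⟨s, (h s).2 ⟨t, ht, bag, hb, hs⟩, rfl⟩

/-- Clauses in which nothing is substituted, so that only the empty bag contributes. -/
theorem IsImage.const
    (hA : ∀ t ∈ A, ∀ bag, F t bag = match bag with | [] => ({t} : Multiset Rt) | _ => 0) :
    IsImage F A C A := by
  intro r
  constructor
  · intro hr
    exact ⟨r, hr, [], by simp, by simp [hA r hr]⟩
  · rintro ⟨t, ht, bag, -, hm⟩
    rw [hA t ht] at hm
    cases bag with
    | nil =>
      rw [Multiset.mem_singleton.1 hm]
      exact ht
    | cons u bag => simp at hm

/-- Clauses in which part of the bag goes into the subterm through `G` and the rest becomes an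
argument: those of named application at an occurrence of the name. -/
theorem IsImage.appArg {G : Rt → List Rt → Multiset Rt} {c d : Rt → Rt}
    (hc : ∀ t bag, F (c t) bag = (splits2 bag).bind fun p =>
      (G t p.1).map fun s => d (.app s p.2))
    (h : IsImage G A C B) :
    IsImage F (c '' A) C
      (d '' {r | ∃ s ∈ B, ∃ bag : List Rt, (∀ u ∈ bag, u ∈ C) ∧ r = Rt.app s bag}) := by
  intro r
  constructor
  · rintro ⟨_, ⟨s, hs, bag', hb', rfl⟩, rfl⟩
    obtain ⟨t, ht, bag, hb, hm⟩ := (h s).1 hs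
    refine ⟨_, ⟨t, ht, rfl⟩, bag ++ bag', ?_, ?_⟩
    · intro u hu
      rcases List.mem_append.1 hu with hu | hu
      · exact hb u hu
      · exact hb' u hu
    · rw [hc, Multiset.mem_bind]
      exact ⟨(bag, bag'), mem_splits2_append _ _, Multiset.mem_map.2 ⟨s, hm, rfl⟩⟩
  · rintro ⟨_, ⟨t, ht, rfl⟩, bag, hb, hm⟩
    rw [hc, Multiset.mem_bind] at hm
    obtain ⟨p, hp, hm⟩ := hm
    obtain ⟨s, hs, rfl⟩ := Multiset.mem_map.1 hm
    exact ⟨_, ⟨s, (h s).2 ⟨t, ht, p.1, fun u hu => hb u (mem_of_mem_splits2 hp (.inl hu)), hs⟩,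
      p.2, fun u hu => hb u (mem_of_mem_splits2 hp (.inr hu)), rfl⟩, rfl⟩

end

/-! ### Taylor expansion of substitutions, named applications and renamings -/

theorem isBagExt_linSub (x : ℕ) : IsBagExt (linSub x) (linSubBag x) :=
  ⟨by simp [linSubBag], by simp [linSubBag], by simp [linSubBag], by simp [linSubBag]⟩

theorem isBagExt_nApp (a : ℕ) : IsBagExt (nApp a) (nAppBag a) :=
  ⟨by simp [nAppBag], by simp [nAppBag], by simp [nAppBag], by simp [nAppBag]⟩

/-- The expansion of `M{N/x}` consists of the addends of the linear substitutions `t⟨[ū]/x⟩`, with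
`t` in the expansion of `M` and `ū` in that of `N`. -/
theorem taylor_subst (x : ℕ) (N M : Lt) :
    IsImage (linSub x) (Taylor M) (Taylor N) (Taylor (subst x N M)) := by
  induction M with
  | var y =>
    by_cases hy : y = x
    · intro s
      simp only [subst, hy, if_true, Taylor, Set.mem_singleton_iff, exists_eq_left, linSub]
      constructor
      · intro hs
        exact ⟨[s], by simpa using hs, by simp⟩
      · rintro ⟨bag, hb, hm⟩
        match bag, hb, hm with
        | [], _, hm => simp at hm
        | [u], hb, hm =>
          rw [Multiset.mem_singleton.1 hm]
          exact hb u (by simp)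
        | _ :: _ :: _, _, hm => simp at hm
    · simp only [subst, hy, if_false]
      refine IsImage.const ?_
      rintro _ rfl bag
      simp only [linSub, hy, if_false]
  | lam y M ih =>
    by_cases hy : y = x
    · simp only [subst, hy, if_true]
      refine IsImage.const ?_
      rintro _ ⟨t, -, rfl⟩ bag
      simp only [linSub, if_true]
    · simp only [subst, hy, if_false, Taylor]
      exact ih.map fun t bag => by simp only [linSub, hy, if_false]
  | app M P ihM ihP =>
    simp only [subst, Taylor]
    exact mem_app_iff (isBagExt_linSub x) (fun t ts bag => by simp only [linSub]) ihM ihP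
  | mu a b M ih =>
    simp only [subst, Taylor]
    exact ih.map fun t bag => by simp only [linSub]

/-- The expansion of `(M)_a N` consists of the addends of the linear named applications `⟨t⟩_a[ū]`,
with `t` in the expansion of `M` and `ū` in that of `N`. -/
theorem taylor_napp (a : ℕ) (N M : Lt) :
    IsImage (nApp a) (Taylor M) (Taylor N) (Taylor (napp a N M)) := by
  induction M with
  | var y =>
    simp only [napp]
    refine IsImage.const ?_
    rintro _ rfl bag
    simp only [nApp]
  | lam y M ih =>
    simp only [napp, Taylor]
    exact ih.map fun t bag => by simp only [nApp]
  | app M P ihM ihP =>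
    simp only [napp, Taylor]
    exact mem_app_iff (isBagExt_nApp a) (fun t ts bag => by simp only [nApp]) ihM ihP
  | mu g e M ih =>
    by_cases hg : g = a
    · simp only [napp, hg, if_true]
      refine IsImage.const ?_
      rintro _ ⟨t, -, rfl⟩ bag
      simp only [nApp, if_true]
    · by_cases he : e = a
      · simp only [napp, hg, if_false, he, if_true, Taylor]
        exact ih.appArg fun t bag => by simp only [nApp, hg, if_false, if_true]
      · simp only [napp, hg, he, if_false, Taylor]
        exact ih.map fun t bag => by simp only [nApp, hg, he, if_false]

/-- The expansion of the μ-reduct of `(μa.[b]P)N`. -/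
theorem taylor_muStep (a b : ℕ) (N P : Lt) :
    IsImage (fun t bag => muRedex a b t bag) (Taylor P) (Taylor N)
      (Taylor (if b = a then .mu a a (.app (napp a N P) N) else .mu a b (napp a N P))) := by
  by_cases hb : b = a
  · simp only [hb, if_true, Taylor]
    have := (taylor_napp a N P).appArg (F := fun t bag => muRedex a b t bag) (c := id)
      (d := .mu a a) (fun t bag => by simp only [muRedex, hb, if_true, id])
    simpa [hb] using this
  · simp only [hb, if_false, Taylor]
    intro s
    simp only [muRedex, hb, if_false]
    constructor
    · rintro ⟨r, hr, rfl⟩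
      obtain ⟨t, ht, bag, hbag, hm⟩ := (taylor_napp a N P r).1 hr
      exact ⟨t, ht, bag, hbag, Multiset.mem_map_of_mem _ hm⟩
    · rintro ⟨t, ht, bag, hbag, hm⟩
      obtain ⟨r, hr, rfl⟩ := Multiset.mem_map.1 hm
      exact ⟨r, (taylor_napp a N P r).2 ⟨t, ht, bag, hbag, hr⟩, rfl⟩

theorem renameNBag_eq_map (a b : ℕ) (ts : List Rt) :
    renameNBag a b ts = ts.map (renameN a b) := by
  induction ts with
  | nil => simp [renameNBag]
  | cons t ts ih => simp [renameNBag, ih]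

theorem taylor_renameL (a b : ℕ) (M : Lt) :
    Taylor (renameL a b M) = renameN a b '' Taylor M := by
  induction M with
  | var y => simp [renameL, Taylor, renameN]
  | lam y M ih => simp only [renameL, Taylor, ih, Set.image_image, renameN]
  | app M P ihM ihP =>
    ext r
    simp only [renameL, Taylor, ihM, ihP]
    constructor
    · rintro ⟨_, ⟨t, ht, rfl⟩, bag, hb, rfl⟩
      obtain ⟨ts, hts, rfl⟩ : ∃ ts : List Rt, (∀ t ∈ ts, t ∈ Taylor P) ∧
          ts.map (renameN a b) = bag := by
        choose! f hf using hb
        refine ⟨bag.map f, ?_, ?_⟩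
        · intro t ht
          obtain ⟨u, hu, rfl⟩ := List.mem_map.1 ht
          exact (hf u hu).1
        · rw [List.map_map]
          exact (List.map_congr_left fun u hu => (hf u hu).2).trans (List.map_id bag)
      exact ⟨_, ⟨t, ht, ts, hts, rfl⟩, by simp only [renameN, renameNBag_eq_map]⟩
    · rintro ⟨_, ⟨t, ht, ts, hts, rfl⟩, rfl⟩
      refine ⟨_, ⟨t, ht, rfl⟩, ts.map (renameN a b), ?_, by simp only [renameN, renameNBag_eq_map]⟩
      intro u hu
      obtain ⟨t', ht', rfl⟩ := List.mem_map.1 hu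
      exact ⟨t', hts t' ht', rfl⟩
  | mu g e M ih =>
    by_cases hg : g = b
    · simp only [renameL, hg, if_true, Taylor, Set.image_image, renameN]
    · simp only [renameL, hg, if_false, Taylor, ih, Set.image_image, renameN]

/-! ### Head reduction -/

/-- Head reduction in the scope of a unary constructor `c`. -/
theorem taylor_head_map {A B : Set Rt} (c : Rt → Rt)
    (hc : ∀ t ∈ A, headRedR (c t) = (headRedR t).map c)
    (h : B = {s : Rt | ∃ t ∈ A, s ∈ headRedR t}) :
    c '' B = {s : Rt | ∃ t ∈ c '' A, s ∈ headRedR t} := by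
  ext r
  constructor
  · rintro ⟨s, hs, rfl⟩
    rw [h] at hs
    obtain ⟨t, ht, hs⟩ := hs
    exact ⟨_, ⟨t, ht, rfl⟩, by rw [hc t ht]; exact Multiset.mem_map_of_mem _ hs⟩
  · rintro ⟨_, ⟨t, ht, rfl⟩, hr⟩
    rw [hc t ht] at hr
    obtain ⟨s, hs, rfl⟩ := Multiset.mem_map.1 hr
    exact ⟨s, by rw [h]; exact ⟨t, ht, hs⟩, rfl⟩

/-- Head reduction in function position. -/
theorem taylor_head_app {A B C : Set Rt}
    (hc : ∀ t ∈ A, ∀ bag, headRedR (.app t bag) = (headRedR t).map fun s => .app s bag)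
    (h : B = {s : Rt | ∃ t ∈ A, s ∈ headRedR t}) :
    {r | ∃ s ∈ B, ∃ bag : List Rt, (∀ u ∈ bag, u ∈ C) ∧ r = Rt.app s bag} =
      {s : Rt | ∃ t ∈ {r | ∃ s ∈ A, ∃ bag : List Rt, (∀ u ∈ bag, u ∈ C) ∧ r = Rt.app s bag},
        s ∈ headRedR t} := by
  ext r
  constructor
  · rintro ⟨s, hs, bag, hb, rfl⟩
    rw [h] at hs
    obtain ⟨t, ht, hs⟩ := hs
    exact ⟨_, ⟨t, ht, bag, hb, rfl⟩, by
      rw [hc t ht]; exact Multiset.mem_map_of_mem (fun s => Rt.app s bag) hs⟩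
  · rintro ⟨_, ⟨t, ht, bag, hb, rfl⟩, hr⟩
    rw [hc t ht] at hr
    obtain ⟨s, hs, rfl⟩ := Multiset.mem_map.1 hr
    exact ⟨s, by rw [h]; exact ⟨t, ht, hs⟩, bag, hb, rfl⟩

/-- The case of a head redex `(c P) N`, the operation `F` computing the addends of its reduct. -/
theorem taylor_head_redex {F : Rt → List Rt → Multiset Rt} {A C B : Set Rt} {c : Rt → Rt}
    (hc : ∀ t bag, headRedR (.app (c t) bag) = F t bag) (h : IsImage F A C B) :
    B = {s : Rt | ∃ t ∈ {r | ∃ s ∈ c '' A, ∃ bag : List Rt,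
      (∀ u ∈ bag, u ∈ C) ∧ r = Rt.app s bag}, s ∈ headRedR t} := by
  ext r
  rw [h r]
  constructor
  · rintro ⟨t, ht, bag, hb, hm⟩
    exact ⟨_, ⟨_, ⟨t, ht, rfl⟩, bag, hb, rfl⟩, by rwa [hc]⟩
  · rintro ⟨_, ⟨_, ⟨t, ht, rfl⟩, bag, hb, rfl⟩, hm⟩
    rw [hc] at hm
    exact ⟨t, ht, bag, hb, hm⟩

/-- Lemma 3.13: the Taylor expansion commutes with head reduction:
`T(H(M)) = ⋃_{t ∈ T(M)} H(t)` whenever `H(M)` is defined. -/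
theorem taylor_head_reduction (M M' : Lt) (h : headRed M = some M') :
    Taylor M' = {s : Rt | ∃ t ∈ Taylor M, s ∈ headRedR t} := by
  induction M generalizing M' with
  | var x => simp [headRed] at h
  | lam x M ih =>
    simp only [headRed, Option.map_eq_some_iff] at h
    obtain ⟨M₁, h, rfl⟩ := h
    exact taylor_head_map (Rt.lam x) (fun t _ => by simp only [headRedR]) (ih _ h)
  | mu g a M ih =>
    cases M with
    | mu b e P =>
      simp only [headRed, Option.some.injEq] at h
      subst h
      ext r
      simp only [Taylor, taylor_renameL, Set.image_image]
      constructor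
      · rintro ⟨t, ht, rfl⟩
        exact ⟨_, ⟨t, ht, rfl⟩, by simp [headRedR]⟩
      · rintro ⟨_, ⟨t, ht, rfl⟩, hr⟩
        simp only [headRedR, Multiset.mem_singleton] at hr
        exact ⟨t, ht, hr.symm⟩
    | var x => simp [headRed] at h
    | lam x P =>
      rw [headRed, Option.map_eq_some_iff] at h
      · obtain ⟨M₁, h, rfl⟩ := h
        refine taylor_head_map (Rt.mu g a) ?_ (ih _ h)
        rintro _ ⟨t, -, rfl⟩
        simp [headRedR]
      · simp
    | app P Q =>
      rw [headRed, Option.map_eq_some_iff] at h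
      · obtain ⟨M₁, h, rfl⟩ := h
        refine taylor_head_map (Rt.mu g a) ?_ (ih _ h)
        rintro _ ⟨t, -, bag, -, rfl⟩
        rw [headRedR]
        intro b e t' ht'
        cases ht'
      · simp
  | app M N ih _ =>
    cases M with
    | var x => simp [headRed] at h
    | lam x P =>
      simp only [headRed, Option.some.injEq] at h
      subst h
      exact taylor_head_redex (fun t bag => by simp only [headRedR]) (taylor_subst x N P)
    | mu a b P =>
      simp only [headRed, Option.some.injEq] at h
      subst h
      exact taylor_head_redex (fun t bag => by simp only [headRedR]) (taylor_muStep a b N P)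
    | app P Q =>
      rw [headRed, Option.map_eq_some_iff] at h
      · obtain ⟨M₁, h, rfl⟩ := h
        refine taylor_head_app ?_ (ih _ h)
        rintro _ ⟨t, -, bag, -, rfl⟩ bag'
        rw [headRedR]
        · simp
        · simp
      · simp
      · simp

end RLMu
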